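/- Let F be an √−1ℝ-valued 2-form on ℝ⁸ with i(e₀)F = 0, i.e. F is the pullback of an √−1ℝ-valued 2-form on V ≅ ℝ⁷ (this is the pointwise model of a connection on a G₂-manifold Y pulled back to S¹ × Y). Then the following are equivalent: (1) *₇φ ∧ F + (1/6)F³ = 0 (the G₂ deformed Donaldson–Thomas equation); (2) π²₇( F + (1/6)·*₈F³ ) = 0; (3) π²₇( F + (1/6)·*₈F³ ) = 0 and π⁴₇( F² ) = 0. -/

import Mathlib

open scoped BigOperators

noncomputable section

namespace FMpaper

variable {K : Type*} [NormedField K] [NormedAlgebra ℝ K]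

/-- Coefficient model for the exterior algebra of `(ℝⁿ)*` with scalars in `K`:
a form is given by its coefficients on the basis `e^S`, `S ⊆ {0, …, n-1}` sorted. -/
abbrev Form (K : Type*) (n : ℕ) := Finset (Fin n) → K

variable {n : ℕ}

/-- Sign such that `e^s ∧ e^t = signMerge s t • e^(s ∪ t)` for disjoint sorted `s, t`. -/
def signMerge (s t : Finset (Fin n)) : K :=
  (-1 : K) ^ (((s ×ˢ t).filter (fun p => p.2 < p.1)).card)

/-- Wedge product. -/
def wedge (α β : Form K n) : Form K n :=
  fun u => ∑ s ∈ u.powerset, signMerge s (u \ s) * α s * β (u \ s)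

/-- Hodge star operator (for the standard inner product and orientation `e^{0⋯(n-1)}`). -/
def hstar (α : Form K n) : Form K n :=
  fun t => signMerge tᶜ t * α tᶜ

/-- Interior product with the basis vector `e_μ`. -/
def iprodB (μ : Fin n) (α : Form K n) : Form K n :=
  fun t => if μ ∈ t then 0
    else (-1 : K) ^ ((t.filter (fun j => j < μ)).card) * α (insert μ t)

/-- Interior product with the vector `v`. -/
def iprod (v : Fin n → K) (α : Form K n) : Form K n :=
  fun t => ∑ μ, v μ * iprodB μ α t

/-- The basis covector `e^i` as a 1-form. -/
def e1 (i : Fin n) : Form K n := fun s => if s = {i} then 1 else 0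

/-- The covector `v♭` dual to a vector `v`. -/
def flat (v : Fin n → K) : Form K n := ∑ i, v i • e1 i

/-- The vector `α♯` dual to a 1-form `α`. -/
def sharp1 (α : Form K n) : Fin n → K := fun i => α {i}

/-- The inner product of forms (extended `K`-bilinearly). -/
def inner' (α β : Form K n) : K := ∑ s, α s * β s

/-- The (Euclidean) norm of a form; for an `√-1 ℝ`-valued form `√-1 γ` this is `‖γ‖`. -/
def fnorm (α : Form K n) : ℝ := Real.sqrt (∑ s, ‖α s‖ ^ 2)

/-- `α` is homogeneous of degree `k`. -/
def isGrade (k : ℕ) (α : Form K n) : Prop := ∀ s, s.card ≠ k → α s = 0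

/-- Evaluation of a `k`-form on `k` vectors. -/
def evalForm {k : ℕ} (α : Form K n) (v : Fin k → (Fin n → K)) : K :=
  ∑ s : Finset (Fin n), α s *
    (if h : s.card = k then
      Matrix.det (Matrix.of fun i j => v i ((s.orderIsoOfFin h j : Fin n))) else 0)

/-- The matrix of the skew-symmetric endomorphism `γ♯` associated with a 2-form `γ`
via `⟨γ♯ u, v⟩ = γ(u, v)`. -/
def mat2 (γ : Form K n) : Matrix (Fin n) (Fin n) K :=
  Matrix.of fun i j => if i < j then γ {i, j} else if j < i then - γ {i, j} else 0

/-- The standard `G₂` 3-form `φ = e^{123}+e^{145}+e^{167}+e^{246}−e^{257}−e^{347}−e^{356}`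
on `ℝ⁷` (indices `1, …, 7` shifted to `0, …, 6`). -/
def phi7 : Form K 7 := fun s =>
  if s = ({0, 1, 2} : Finset (Fin 7)) then 1
  else if s = ({0, 3, 4} : Finset (Fin 7)) then 1
  else if s = ({0, 5, 6} : Finset (Fin 7)) then 1
  else if s = ({1, 3, 5} : Finset (Fin 7)) then 1
  else if s = ({1, 4, 6} : Finset (Fin 7)) then -1
  else if s = ({2, 3, 6} : Finset (Fin 7)) then -1
  else if s = ({2, 4, 5} : Finset (Fin 7)) then -1
  else 0

/-- `*₇φ = e^{4567}+e^{2367}+e^{2345}+e^{1357}−e^{1346}−e^{1256}−e^{1247}` on `ℝ⁷`. -/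
def psi7 : Form K 7 := fun s =>
  if s = ({3, 4, 5, 6} : Finset (Fin 7)) then 1
  else if s = ({1, 2, 5, 6} : Finset (Fin 7)) then 1
  else if s = ({1, 2, 3, 4} : Finset (Fin 7)) then 1
  else if s = ({0, 2, 4, 6} : Finset (Fin 7)) then 1
  else if s = ({0, 2, 3, 5} : Finset (Fin 7)) then -1
  else if s = ({0, 1, 4, 5} : Finset (Fin 7)) then -1
  else if s = ({0, 1, 3, 6} : Finset (Fin 7)) then -1
  else 0

/-- The `G₂` 3-form `φ` on `V = span{e₁, …, e₇} ⊂ ℝ⁸`, regarded as a form on `ℝ⁸`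
annihilated by `i(e₀)` (indices `1, …, 7` of `ℝ⁸`). -/
def phi8 : Form K 8 := fun s =>
  if s = ({1, 2, 3} : Finset (Fin 8)) then 1
  else if s = ({1, 4, 5} : Finset (Fin 8)) then 1
  else if s = ({1, 6, 7} : Finset (Fin 8)) then 1
  else if s = ({2, 4, 6} : Finset (Fin 8)) then 1
  else if s = ({2, 5, 7} : Finset (Fin 8)) then -1
  else if s = ({3, 4, 7} : Finset (Fin 8)) then -1
  else if s = ({3, 5, 6} : Finset (Fin 8)) then -1
  else 0

/-- `*₇φ` on `V ⊂ ℝ⁸`, regarded as a 4-form on `ℝ⁸` annihilated by `i(e₀)`. -/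
def psi8 : Form K 8 := fun s =>
  if s = ({4, 5, 6, 7} : Finset (Fin 8)) then 1
  else if s = ({2, 3, 6, 7} : Finset (Fin 8)) then 1
  else if s = ({2, 3, 4, 5} : Finset (Fin 8)) then 1
  else if s = ({1, 3, 5, 7} : Finset (Fin 8)) then 1
  else if s = ({1, 3, 4, 6} : Finset (Fin 8)) then -1
  else if s = ({1, 2, 5, 6} : Finset (Fin 8)) then -1
  else if s = ({1, 2, 4, 7} : Finset (Fin 8)) then -1
  else 0

/-- The standard Cayley 4-form `Φ = e⁰ ∧ φ + *₇φ` on `ℝ⁸`. -/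
def Phi8 : Form K 8 := wedge (e1 0) phi8 + psi8

/-- The index set of `V = span{e₁, …, e₇} ⊂ ℝ⁸`. -/
def Vset : Finset (Fin 8) := {1, 2, 3, 4, 5, 6, 7}

/-- The Hodge star `*₇` of `V ⊂ ℝ⁸` (volume form `e^{1⋯7}`), acting on forms on `ℝ⁸`
annihilated by `i(e₀)`. -/
def star7 (α : Form K 8) : Form K 8 :=
  fun t => if (0 : Fin 8) ∈ t then 0 else signMerge (Vset \ t) t * α (Vset \ t)

/-- `α` is (the pullback of) a form on `V`, i.e. `i(e₀) α = 0`. -/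
def onV (α : Form K 8) : Prop := ∀ s, (0 : Fin 8) ∈ s → α s = 0

/-- `λ²(α) = ½ (e⁰ ∧ α + i(α♯) φ)` for `α ∈ V*`. -/
def lambda2 (α : Form K 8) : Form K 8 :=
  (2 : K)⁻¹ • (wedge (e1 0) α + iprod (sharp1 α) phi8)

/-- `λ⁴(α) = (1/√8) (e⁰ ∧ i(α♯) *₇φ − α ∧ φ)` for `α ∈ V*`. -/
def lambda4 (α : Form K 8) : Form K 8 :=
  (algebraMap ℝ K (Real.sqrt 8))⁻¹ • (wedge (e1 0) (iprod (sharp1 α) psi8) - wedge α phi8)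

/-- `λ⁶(α) = *₈ λ²(α)` for `α ∈ V*`. -/
def lambda6 (α : Form K 8) : Form K 8 := hstar (lambda2 α)

/-- The projection `π²₇(α) = (α + *₈(Φ ∧ α))/4` onto `Λ²₇`. -/
def pi27 (α : Form K 8) : Form K 8 := (4 : K)⁻¹ • (α + hstar (wedge Phi8 α))

/-- The projection `π⁴₇(β) = Σ_{μ=1}^{7} ⟨β, λ⁴(e^μ)⟩ λ⁴(e^μ)` onto `Λ⁴₇`. -/
def pi47 (β : Form K 8) : Form K 8 :=
  ∑ μ : Fin 7, inner' β (lambda4 (e1 μ.succ)) • lambda4 (e1 μ.succ)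

/-- `τ(u₀,u₁,u₂,u₃) = Σ_{μ=1}^{7} λ⁴(e^μ)(u₀,u₁,u₂,u₃) ⬝ λ⁴(e^μ) = π⁴₇(u₀♭∧u₁♭∧u₂♭∧u₃♭)`. -/
def tau4 (u : Fin 4 → (Fin 8 → K)) : Form K 8 :=
  ∑ μ : Fin 7, evalForm (lambda4 (e1 μ.succ)) u • lambda4 (e1 μ.succ)

/-- Partial derivative `∂f^a/∂x^j` at `x`. -/
def pd {m p : ℕ} (f : (Fin m → ℝ) → (Fin p → ℝ)) (x : Fin m → ℝ) (j : Fin m) (a : Fin p) : ℝ :=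
  fderiv ℝ f x (Pi.single j 1) a

/-!
Write `ψ = *₇φ` and let `i_μ` be the interior product with `e_μ`. If `E` is an even form on `V`
then `*₈E = e⁰ ∧ *₇E`, and `π²₇(e⁰ ∧ b) = ¼ (e⁰ ∧ b + *₇(ψ ∧ b))` for `b` on `V`; comparing the
`e⁰`-parts, `π²₇(*₈E) = 0` forces `E = 0`. The `G₂` identity `*₇(ψ ∧ *₇(ψ ∧ F)) = F + *₇(φ ∧ F)`
says that `π²₇(*₈(ψ ∧ F)) = π²₇(F)`. Hence the form in (2) is `π²₇(*₈E)` for `E = ψ ∧ F + ⅙ F³`,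
which gives (1) ⟺ (2).

For (3), `⟨F², λ⁴(e^μ)⟩` is a multiple of the `e^{1⋯7}`-coefficient of
`ψ ∧ i_μ(F²) = 2 i_μF ∧ F ∧ ψ`. By (1) this form is a multiple of `i_μF ∧ F³ = ¼ i_μ(F⁴)`, no
monomial of which involves `e^μ`.
-/

section ExteriorAlgebra

-- The real scalars of `K` are dropped: part of the development also runs over `ℚ`.
variable {𝕜 : Type*} [NormedField 𝕜]

lemma signMerge_eq_prod (s t : Finset (Fin n)) :
    (signMerge s t : 𝕜) = ∏ i ∈ s, ∏ j ∈ t, if j < i then -1 else 1 := by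
  rw [← Finset.prod_product', Finset.prod_ite, Finset.prod_const_one, Finset.prod_const, mul_one,
    signMerge]

lemma signMerge_union_left {s t : Finset (Fin n)} (h : Disjoint s t) (u : Finset (Fin n)) :
    (signMerge (s ∪ t) u : 𝕜) = signMerge s u * signMerge t u := by
  simp only [signMerge_eq_prod, Finset.prod_union h]

lemma signMerge_union_right {t u : Finset (Fin n)} (s : Finset (Fin n)) (h : Disjoint t u) :
    (signMerge s (t ∪ u) : 𝕜) = signMerge s t * signMerge s u := by
  simp only [signMerge_eq_prod, Finset.prod_union h, Finset.prod_mul_distrib]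

lemma signMerge_insert_left {i : Fin n} {s : Finset (Fin n)} (hi : i ∉ s) (t : Finset (Fin n)) :
    (signMerge (insert i s) t : 𝕜) = signMerge {i} t * signMerge s t :=
  signMerge_union_left (Finset.disjoint_singleton_left.2 hi) t

lemma signMerge_insert_right {i : Fin n} {t : Finset (Fin n)} (s : Finset (Fin n)) (hi : i ∉ t) :
    (signMerge s (insert i t) : 𝕜) = signMerge s {i} * signMerge s t :=
  signMerge_union_right s (Finset.disjoint_singleton_left.2 hi)

lemma signMerge_zero_left (t : Finset (Fin (n + 1))) : (signMerge {0} t : 𝕜) = 1 := by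
  simp [signMerge_eq_prod]

lemma signMerge_mul_self (s t : Finset (Fin n)) :
    (signMerge s t * signMerge s t : 𝕜) = 1 := by
  simp only [signMerge_eq_prod, ← Finset.prod_mul_distrib]
  refine Finset.prod_eq_one fun i _ ↦ Finset.prod_eq_one fun j _ ↦ ?_
  split_ifs <;> ring

lemma signMerge_mul_signMerge_swap {s t : Finset (Fin n)} (h : Disjoint s t) :
    (signMerge s t * signMerge t s : 𝕜) = (-1) ^ (s.card * t.card) := by
  rw [signMerge_eq_prod, signMerge_eq_prod, Finset.prod_comm (s := t)]
  simp only [← Finset.prod_mul_distrib]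
  calc _ = ∏ _i ∈ s, ∏ _j ∈ t, (-1 : 𝕜) := by
        refine Finset.prod_congr rfl fun i hi ↦ Finset.prod_congr rfl fun j hj ↦ ?_
        rcases (Finset.disjoint_iff_ne.1 h i hi j hj).lt_or_gt with hij | hij <;>
          simp [hij, hij.asymm]
    _ = _ := by rw [Finset.prod_const, Finset.prod_const, ← pow_mul, mul_comm]

lemma signMerge_singleton_mul_swap {i : Fin n} {s : Finset (Fin n)} (hi : i ∉ s) :
    (signMerge {i} s * signMerge s {i} : 𝕜) = (-1) ^ s.card := by
  rw [signMerge_mul_signMerge_swap (Finset.disjoint_singleton_left.2 hi), Finset.card_singleton,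
    one_mul]

lemma signMerge_comm_of_even {s t : Finset (Fin n)} (h : Disjoint s t)
    (he : Even (s.card * t.card)) : (signMerge s t : 𝕜) = signMerge t s := by
  have hswap := signMerge_mul_signMerge_swap (𝕜 := 𝕜) h
  rw [he.neg_one_pow] at hswap
  calc (signMerge s t : 𝕜) = signMerge s t * signMerge t s * signMerge t s := by
        rw [mul_assoc, signMerge_mul_self, mul_one]
    _ = signMerge t s := by rw [hswap, one_mul]

lemma isGrade_add {k : ℕ} {α β : Form 𝕜 n} (hα : isGrade k α) (hβ : isGrade k β) :
    isGrade k (α + β) := by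
  intro s hs
  rw [Pi.add_apply, hα s hs, hβ s hs, add_zero]

lemma isGrade_smul {k : ℕ} {α : Form 𝕜 n} (c : 𝕜) (hα : isGrade k α) : isGrade k (c • α) := by
  intro s hs
  rw [Pi.smul_apply, hα s hs, smul_zero]

lemma isGrade_e1 (i : Fin n) : isGrade 1 (e1 i : Form 𝕜 n) := by
  intro s hs
  exact if_neg fun h : s = {i} ↦ hs (h ▸ Finset.card_singleton i)

lemma neg_one_pow_mul_apply_of_isGrade {k : ℕ} {α : Form 𝕜 n} (hα : isGrade k α)
    (s : Finset (Fin n)) : (-1) ^ k * α s = (-1) ^ s.card * α s := by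
  by_cases hs : s.card = k
  · rw [hs]
  · rw [hα s hs, mul_zero, mul_zero]

lemma isGrade_wedge {k l : ℕ} {α β : Form 𝕜 n} (hα : isGrade k α) (hβ : isGrade l β) :
    isGrade (k + l) (wedge α β) := by
  intro u hu
  refine Finset.sum_eq_zero fun s hs ↦ ?_
  by_cases hsk : s.card = k
  · have hcard := Finset.card_sdiff_add_card_eq_card (Finset.mem_powerset.1 hs)
    rw [hβ _ (by omega), mul_zero]
  · rw [hα s hsk, mul_zero, zero_mul]

lemma wedge_apply_sdiff (α β : Form 𝕜 n) (u : Finset (Fin n)) :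
    wedge α β u = ∑ t ∈ u.powerset, signMerge (u \ t) t * α (u \ t) * β t := by
  refine Finset.sum_nbij' (u \ ·) (u \ ·) ?_ ?_ ?_ ?_ ?_ <;> intro s hs <;>
    have hs := Finset.mem_powerset.1 hs
  all_goals simp [Finset.sdiff_sdiff_eq_self hs]

lemma wedge_apply_insert (α β : Form 𝕜 n) {i : Fin n} {t : Finset (Fin n)} (hi : i ∉ t) :
    wedge α β (insert i t) = ∑ s ∈ t.powerset, signMerge s (t \ s) *
      (signMerge s {i} * α s * β (insert i (t \ s)) +
        signMerge {i} (t \ s) * α (insert i s) * β (t \ s)) := by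
  rw [wedge, Finset.sum_powerset_insert hi, ← Finset.sum_add_distrib]
  refine Finset.sum_congr rfl fun s hs ↦ ?_
  have his : i ∉ s := fun h ↦ hi (Finset.mem_powerset.1 hs h)
  have hits : i ∉ t \ s := fun h ↦ hi (Finset.sdiff_subset h)
  rw [Finset.insert_sdiff_of_notMem t his, Finset.insert_sdiff_insert,
    Finset.sdiff_insert_of_notMem hi, signMerge_insert_right s hits,
    signMerge_insert_left his]
  ring

lemma wedge_e1_apply (i : Fin n) (α : Form 𝕜 n) (u : Finset (Fin n)) :
    wedge (e1 i) α u = if i ∈ u then signMerge {i} (u.erase i) * α (u.erase i) else 0 := by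
  simp only [wedge, e1, mul_ite, ite_mul, mul_one, mul_zero, zero_mul, Finset.sum_ite_eq',
    Finset.mem_powerset, Finset.singleton_subset_iff, Finset.erase_eq]

lemma wedge_e1_wedge_e1 (i : Fin n) (α : Form 𝕜 n) : wedge (e1 i) (wedge (e1 i) α) = 0 := by
  funext u
  simp [wedge_e1_apply]

lemma wedge_add (α β γ : Form 𝕜 n) : wedge α (β + γ) = wedge α β + wedge α γ := by
  funext u
  simp only [wedge, Pi.add_apply, mul_add, Finset.sum_add_distrib]

lemma add_wedge (α β γ : Form 𝕜 n) : wedge (α + β) γ = wedge α γ + wedge β γ := by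
  funext u
  simp only [wedge, Pi.add_apply, mul_add, add_mul, Finset.sum_add_distrib]

lemma wedge_smul (c : 𝕜) (α β : Form 𝕜 n) : wedge α (c • β) = c • wedge α β := by
  funext u
  simp only [wedge, Pi.smul_apply, smul_eq_mul, Finset.mul_sum]
  exact Finset.sum_congr rfl fun s _ ↦ by ring

lemma smul_wedge (c : 𝕜) (α β : Form 𝕜 n) : wedge (c • α) β = c • wedge α β := by
  funext u
  simp only [wedge, Pi.smul_apply, smul_eq_mul, Finset.mul_sum]
  exact Finset.sum_congr rfl fun s _ ↦ by ring

lemma wedge_assoc (α β γ : Form 𝕜 n) : wedge (wedge α β) γ = wedge α (wedge β γ) := by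
  funext u
  simp only [wedge, Finset.mul_sum, Finset.sum_mul]
  rw [Finset.sum_sigma', Finset.sum_sigma']
  refine Finset.sum_nbij' (fun p ↦ ⟨p.2, p.1 \ p.2⟩) (fun p ↦ ⟨p.1 ∪ p.2, p.1⟩) ?_ ?_ ?_ ?_ ?_
  · rintro ⟨v, s⟩ h
    simp only [Finset.mem_sigma, Finset.mem_powerset] at h ⊢
    exact ⟨h.2.trans h.1, Finset.sdiff_subset_sdiff h.1 le_rfl⟩
  · rintro ⟨s, t⟩ h
    simp only [Finset.mem_sigma, Finset.mem_powerset] at h ⊢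
    exact ⟨Finset.union_subset h.1 (h.2.trans Finset.sdiff_subset), Finset.subset_union_left⟩
  · rintro ⟨v, s⟩ h
    simp only [Finset.mem_sigma, Finset.mem_powerset] at h
    simp [Finset.union_sdiff_of_subset h.2]
  · rintro ⟨s, t⟩ h
    simp only [Finset.mem_sigma, Finset.mem_powerset, Finset.subset_sdiff] at h
    simp [Finset.union_sdiff_cancel_left h.2.2.symm]
  · rintro ⟨v, s⟩ h
    simp only [Finset.mem_sigma, Finset.mem_powerset] at h
    obtain ⟨hv, hs⟩ := h
    have hrest : (u \ s) \ (v \ s) = u \ v := by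
      rw [sdiff_sdiff_left, Finset.sup_eq_union, Finset.union_sdiff_of_subset hs]
    have hleft : (signMerge v (u \ v) : 𝕜) =
        signMerge s (u \ v) * signMerge (v \ s) (u \ v) := by
      rw [← signMerge_union_left Finset.disjoint_sdiff, Finset.union_sdiff_of_subset hs]
    have hright : (signMerge s (u \ s) : 𝕜) =
        signMerge s (v \ s) * signMerge s (u \ v) := by
      rw [← signMerge_union_right s (Finset.disjoint_sdiff.mono_left Finset.sdiff_subset),
        Finset.union_comm, Finset.sdiff_union_sdiff_cancel hv hs]
    simp only [hrest, hleft, hright]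
    ring

lemma wedge_comm_of_even {k : ℕ} (hk : Even k) {α : Form 𝕜 n} (hα : isGrade k α)
    (β : Form 𝕜 n) : wedge α β = wedge β α := by
  funext u
  rw [wedge_apply_sdiff β]
  refine Finset.sum_congr rfl fun s _ ↦ ?_
  by_cases hs : s.card = k
  · rw [signMerge_comm_of_even Finset.disjoint_sdiff (hs ▸ hk.mul_right _)]
    ring
  · rw [hα s hs]
    ring

lemma iprodB_apply_of_notMem {i : Fin n} {t : Finset (Fin n)} (hi : i ∉ t) (α : Form 𝕜 n) :
    iprodB i α t = signMerge {i} t * α (insert i t) := by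
  simp only [iprodB, if_neg hi, signMerge, Finset.singleton_product, Finset.filter_map,
    Finset.card_map]
  rfl

lemma iprodB_apply_insert (i : Fin n) (α : Form 𝕜 n) (t : Finset (Fin n)) :
    iprodB i α (insert i t) = 0 :=
  if_pos (Finset.mem_insert_self i t)

lemma iprodB_wedge {k : ℕ} {α : Form 𝕜 n} (hα : isGrade k α) (i : Fin n) (β : Form 𝕜 n) :
    iprodB i (wedge α β) = wedge (iprodB i α) β + (-1 : 𝕜) ^ k • wedge α (iprodB i β) := by
  funext t
  simp only [Pi.add_apply, Pi.smul_apply, smul_eq_mul]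
  by_cases hi : i ∈ t
  · obtain ⟨r, hr, rfl⟩ : ∃ r, i ∉ r ∧ insert i r = t :=
      ⟨t.erase i, Finset.notMem_erase i t, Finset.insert_erase hi⟩
    rw [iprodB_apply_insert, wedge_apply_insert _ _ hr, wedge_apply_insert _ _ hr,
      Finset.mul_sum, ← Finset.sum_add_distrib]
    refine (Finset.sum_eq_zero fun s hs ↦ ?_).symm
    have his : i ∉ s := fun h ↦ hr (Finset.mem_powerset.1 hs h)
    have hirs : i ∉ r \ s := fun h ↦ hr (Finset.sdiff_subset h)
    have hgrade := neg_one_pow_mul_apply_of_isGrade hα (insert i s)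
    rw [Finset.card_insert_of_notMem his, pow_succ, ← signMerge_singleton_mul_swap his] at hgrade
    simp only [iprodB_apply_insert, iprodB_apply_of_notMem his, iprodB_apply_of_notMem hirs]
    linear_combination signMerge s (r \ s) * β (insert i (r \ s)) *
      (hgrade * signMerge {i} (r \ s) * signMerge {i} (r \ s) - signMerge {i} s *
        signMerge s {i} * α (insert i s) * signMerge_mul_self (𝕜 := 𝕜) {i} (r \ s))
  · rw [iprodB_apply_of_notMem hi, wedge_apply_insert _ _ hi, wedge, wedge, Finset.mul_sum,
      Finset.mul_sum, ← Finset.sum_add_distrib]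
    refine Finset.sum_congr rfl fun s hs ↦ ?_
    have hst := Finset.mem_powerset.1 hs
    have his : i ∉ s := fun h ↦ hi (hst h)
    have hits : i ∉ t \ s := fun h ↦ hi (Finset.sdiff_subset h)
    have hsplit : (signMerge {i} t : 𝕜) = signMerge {i} s * signMerge {i} (t \ s) := by
      rw [← signMerge_union_right _ Finset.disjoint_sdiff, Finset.union_sdiff_of_subset hst]
    have hgrade := neg_one_pow_mul_apply_of_isGrade hα s
    rw [← signMerge_singleton_mul_swap his] at hgrade
    rw [iprodB_apply_of_notMem his, iprodB_apply_of_notMem hits, hsplit]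
    linear_combination signMerge s (t \ s) * (signMerge {i} s * α (insert i s) * β (t \ s) *
      signMerge_mul_self (𝕜 := 𝕜) {i} (t \ s) -
        hgrade * signMerge {i} (t \ s) * β (insert i (t \ s)))

lemma iprodB_wedge_self {k : ℕ} (hk : Even k) {α : Form 𝕜 n} (hα : isGrade k α) (i : Fin n) :
    iprodB i (wedge α α) = (2 : 𝕜) • wedge (iprodB i α) α := by
  rw [iprodB_wedge hα, hk.neg_one_pow, one_smul, wedge_comm_of_even hk hα, two_smul]

lemma two_smul_wedge_iprodB_wedge_self {k l : ℕ} (hk : Even k) (hl : Even l) {α β : Form 𝕜 n}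
    (hα : isGrade k α) (hβ : isGrade l β) {c : 𝕜} (h : wedge β α = c • wedge α (wedge α α))
    (i : Fin n) :
    (2 : 𝕜) • wedge β (iprodB i (wedge α α)) =
      c • iprodB i (wedge (wedge α α) (wedge α α)) := by
  have hcubic : wedge β (wedge (iprodB i α) α) = c • wedge (iprodB i α) (wedge α (wedge α α)) := by
    rw [wedge_comm_of_even hl hβ, wedge_assoc, ← wedge_comm_of_even hl hβ, h, wedge_smul]
  rw [iprodB_wedge_self (hk.add hk) (isGrade_wedge hα hα), iprodB_wedge_self hk hα, wedge_smul,
    smul_wedge, hcubic, wedge_assoc, smul_comm c, smul_comm c]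

lemma sharp1_e1 (i : Fin n) : sharp1 (e1 i : Form 𝕜 n) = Pi.single i 1 := by
  funext j
  simp [sharp1, e1, Pi.single_apply]

lemma iprod_single (i : Fin n) (α : Form 𝕜 n) : iprod (Pi.single i 1) α = iprodB i α := by
  funext t
  simp [iprod, Pi.single_apply]

lemma inner'_eq_dotProduct (α β : Form 𝕜 n) : inner' α β = dotProduct α β := rfl

lemma inner'_wedge_e1 (i : Fin n) (α β : Form 𝕜 n) :
    inner' α (wedge (e1 i) β) = inner' (iprodB i α) β := by
  calc inner' α (wedge (e1 i) β)
      = ∑ s with i ∈ s, α s * (signMerge {i} (s.erase i) * β (s.erase i)) := by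
        simp only [inner', wedge_e1_apply, mul_ite, mul_zero, Finset.sum_filter]
    _ = ∑ t with i ∉ t, signMerge {i} t * α (insert i t) * β t := by
        refine Finset.sum_nbij' (·.erase i) (insert i ·) ?_ ?_ ?_ ?_ ?_ <;> intro s hs <;>
          have hs := (Finset.mem_filter.1 hs).2
        all_goals simp [hs, mul_left_comm, mul_assoc]
    _ = inner' (iprodB i α) β := by
        rw [Finset.sum_filter]
        refine Finset.sum_congr rfl fun t _ ↦ ?_
        split_ifs with ht
        · rw [iprodB, if_pos ht, zero_mul]
        · rw [iprodB_apply_of_notMem ht]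

lemma hstar_add (α β : Form 𝕜 n) : hstar (α + β) = hstar α + hstar β := by
  funext t
  exact mul_add _ _ _

lemma hstar_smul (c : 𝕜) (α : Form 𝕜 n) : hstar (c • α) = c • hstar α := by
  funext t
  exact mul_left_comm _ _ _

/-- The matrix of the interior product with `γ`: its `(s, t)` entry is the coefficient of `e^t` in
`e^s ⌟ γ`. -/
def contractMatrix (γ : Form 𝕜 n) : Matrix (Finset (Fin n)) (Finset (Fin n)) 𝕜 :=
  Matrix.of fun s t ↦ if Disjoint s t then signMerge s t * γ (s ∪ t) else 0

lemma contractMatrix_apply (γ : Form 𝕜 n) (s t : Finset (Fin n)) :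
    contractMatrix γ s t = if Disjoint s t then signMerge s t * γ (s ∪ t) else 0 :=
  rfl

lemma contractMatrix_eq_zero {k : ℕ} {γ : Form 𝕜 n} (hγ : isGrade k γ) {s t : Finset (Fin n)}
    (h : s.card + t.card ≠ k) : contractMatrix γ s t = 0 := by
  rw [contractMatrix_apply]
  split_ifs with hst
  · rw [hγ, mul_zero]
    rwa [Finset.card_union_of_disjoint hst]
  · rfl

/-- The interior product `β ⌟ γ`, normalised by `e^s ⌟ (e^s ∧ e^t) = e^t`. It is encoded as the
vector-matrix product of `β` with `contractMatrix γ`, so that iterated interior products become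
matrix products. -/
def contract (β γ : Form 𝕜 n) : Form 𝕜 n := Matrix.vecMul β (contractMatrix γ)

lemma contract_apply (β γ : Form 𝕜 n) (t : Finset (Fin n)) :
    contract β γ t = ∑ s, β s * contractMatrix γ s t :=
  rfl

lemma isGrade_contract {k l m : ℕ} (hm : k + l = m) {β γ : Form 𝕜 n} (hβ : isGrade k β)
    (hγ : isGrade m γ) : isGrade l (contract β γ) := by
  intro t ht
  rw [contract_apply]
  refine Finset.sum_eq_zero fun s _ ↦ ?_
  by_cases hs : s.card = k
  · rw [contractMatrix_eq_zero hγ (by omega), mul_zero]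
  · rw [hβ s hs, zero_mul]

end ExteriorAlgebra

section Hyperplane

variable {𝕜 : Type*} [NormedField 𝕜]

lemma Vset_eq_compl : Vset = {0}ᶜ := by decide

lemma subset_Vset_iff {s : Finset (Fin 8)} : s ⊆ Vset ↔ 0 ∉ s := by
  rw [Vset_eq_compl, Finset.subset_compl_singleton]

lemma zero_notMem_Vset_sdiff (t : Finset (Fin 8)) : 0 ∉ Vset \ t :=
  subset_Vset_iff.1 Finset.sdiff_subset

lemma compl_insert_zero (t : Finset (Fin 8)) : (insert 0 t)ᶜ = Vset \ t := by
  ext i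
  simp [Vset_eq_compl, Finset.mem_sdiff]

lemma compl_eq_insert_zero {t : Finset (Fin 8)} (ht : 0 ∉ t) : tᶜ = insert 0 (Vset \ t) := by
  rw [← compl_insert_zero, Finset.compl_insert, Finset.insert_erase (Finset.mem_compl.2 ht)]

lemma onV_add {α β : Form 𝕜 8} (hα : onV α) (hβ : onV β) : onV (α + β) := by
  intro s hs
  rw [Pi.add_apply, hα s hs, hβ s hs, add_zero]

lemma onV_smul (c : 𝕜) {α : Form 𝕜 8} (hα : onV α) : onV (c • α) := by
  intro s hs
  rw [Pi.smul_apply, hα s hs, smul_zero]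

lemma onV_wedge {α β : Form 𝕜 8} (hα : onV α) (hβ : onV β) : onV (wedge α β) := by
  intro u hu
  refine Finset.sum_eq_zero fun s _ ↦ ?_
  by_cases hs : 0 ∈ s
  · rw [hα s hs, mul_zero, zero_mul]
  · rw [hβ _ (Finset.mem_sdiff.2 ⟨hu, hs⟩), mul_zero]

lemma onV_iprodB {α : Form 𝕜 8} (hα : onV α) (i : Fin 8) : onV (iprodB i α) := by
  intro s hs
  rw [iprodB]
  split_ifs
  · rfl
  · rw [hα _ (Finset.mem_insert_of_mem hs), mul_zero]

lemma onV_contract (β : Form 𝕜 8) {γ : Form 𝕜 8} (hγ : onV γ) : onV (contract β γ) := by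
  intro t ht
  rw [contract_apply]
  refine Finset.sum_eq_zero fun s _ ↦ ?_
  rw [contractMatrix_apply, hγ _ (Finset.mem_union_right s ht), mul_zero, ite_self, mul_zero]

lemma onV_star7 (α : Form 𝕜 8) : onV (star7 α) := fun _ hs ↦ if_pos hs

lemma iprodB_zero_of_onV {α : Form 𝕜 8} (hα : onV α) : iprodB 0 α = 0 := by
  funext t
  rw [iprodB, hα _ (Finset.mem_insert_self 0 t), mul_zero, ite_self]
  rfl

lemma apply_eq_zero_of_notMem_powersetCard {k : ℕ} {α : Form 𝕜 8} (hα : isGrade k α)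
    (hV : onV α) {s : Finset (Fin 8)} (hs : s ∉ Vset.powersetCard k) : α s = 0 := by
  by_contra h
  exact hs <| Finset.mem_powersetCard.2
    ⟨subset_Vset_iff.2 fun h0 ↦ h (hV s h0), not_not.1 fun hk ↦ h (hα s hk)⟩

lemma star7_apply_of_notMem {t : Finset (Fin 8)} (ht : 0 ∉ t) (α : Form 𝕜 8) :
    star7 α t = signMerge (Vset \ t) t * α (Vset \ t) :=
  if_neg ht

lemma star7_star7 {α : Form 𝕜 8} (hα : onV α) : star7 (star7 α) = α := by
  funext t
  by_cases ht : 0 ∈ t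
  · rw [onV_star7 _ t ht, hα t ht]
  · have htV : t ⊆ Vset := subset_Vset_iff.2 ht
    have heven : Even ((Vset \ t).card * t.card) := by
      by_contra hodd
      rw [Nat.not_even_iff_odd, Nat.odd_mul] at hodd
      have hcard : (Vset \ t).card + t.card = 7 := Finset.card_sdiff_add_card_eq_card htV
      exact absurd (hcard ▸ hodd.1.add_odd hodd.2) (by decide)
    rw [star7_apply_of_notMem ht, star7_apply_of_notMem (zero_notMem_Vset_sdiff t),
      Finset.sdiff_sdiff_eq_self htV, ← mul_assoc,
      signMerge_mul_signMerge_swap Finset.sdiff_disjoint, heven.neg_one_pow, one_mul]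

lemma star7_wedge (α β : Form 𝕜 8) : star7 (wedge α β) = contract β (star7 α) := by
  funext t
  rw [contract_apply]
  by_cases ht : 0 ∈ t
  · rw [onV_star7 _ t ht]
    refine (Finset.sum_eq_zero fun s _ ↦ ?_).symm
    rw [contractMatrix_apply, onV_star7 _ _ (Finset.mem_union_right s ht), mul_zero, ite_self,
      mul_zero]
  · rw [star7_apply_of_notMem ht, wedge_apply_sdiff, Finset.mul_sum]
    refine Finset.sum_subset_zero_on_sdiff (Finset.subset_univ _) (fun s hs ↦ ?_) fun s hs ↦ ?_ <;>
      rw [contractMatrix_apply]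
    · rw [Finset.mem_sdiff, Finset.mem_powerset, Finset.subset_sdiff, subset_Vset_iff] at hs
      split_ifs with hst
      · rw [onV_star7 _ (s ∪ t), mul_zero, mul_zero]
        by_contra h0
        exact hs.2 ⟨fun h ↦ h0 (Finset.mem_union_left t h), hst⟩
      · rw [mul_zero]
    · rw [Finset.mem_powerset] at hs
      have hsVt := Finset.subset_sdiff.1 hs
      have h0 : 0 ∉ s ∪ t :=
        subset_Vset_iff.1 (Finset.union_subset hsVt.1 (subset_Vset_iff.2 ht))
      have hrest : Vset \ (s ∪ t) = (Vset \ t) \ s := by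
        rw [sdiff_sdiff_left, Finset.sup_eq_union, Finset.union_comm]
      have hsplit : (signMerge (Vset \ t) t : 𝕜) =
          signMerge ((Vset \ t) \ s) t * signMerge s t := by
        rw [← signMerge_union_left Finset.sdiff_disjoint, Finset.sdiff_union_of_subset hs]
      rw [if_pos hsVt.2, star7_apply_of_notMem h0, hrest, hsplit,
        signMerge_union_right _ hsVt.2]
      ring

lemma inner'_star7 (α : Form 𝕜 8) {β : Form 𝕜 8} (hβ : onV β) :
    inner' β (star7 α) = wedge α β Vset := by
  rw [wedge_apply_sdiff]
  symm
  refine Finset.sum_subset_zero_on_sdiff (Finset.subset_univ _) (fun s hs ↦ ?_) fun s hs ↦ ?_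
  · rw [Finset.mem_sdiff, Finset.mem_powerset, subset_Vset_iff, not_not] at hs
    rw [hβ s hs.2, zero_mul]
  · rw [Finset.mem_powerset, subset_Vset_iff] at hs
    rw [star7, if_neg hs]
    ring

lemma hstar_wedge_e1_zero (α : Form 𝕜 8) : hstar (wedge (e1 0) α) = star7 α := by
  funext t
  rw [hstar, wedge_e1_apply]
  by_cases ht : 0 ∈ t
  · rw [if_neg (Finset.notMem_compl.2 ht), onV_star7 α t ht, mul_zero]
  · rw [if_pos (Finset.mem_compl.2 ht), star7_apply_of_notMem ht, compl_eq_insert_zero ht,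
      Finset.erase_insert (zero_notMem_Vset_sdiff t),
      signMerge_insert_left (zero_notMem_Vset_sdiff t), signMerge_zero_left, signMerge_zero_left]
    ring

lemma hstar_eq_wedge_e1_zero_star7 {k : ℕ} (hk : Even k) {α : Form 𝕜 8} (hα : isGrade k α)
    (hV : onV α) : hstar α = wedge (e1 0) (star7 α) := by
  funext t
  rw [hstar, wedge_e1_apply]
  by_cases ht : 0 ∈ t
  · obtain ⟨r, hr, rfl⟩ : ∃ r, 0 ∉ r ∧ insert 0 r = t :=
      ⟨t.erase 0, Finset.notMem_erase 0 t, Finset.insert_erase ht⟩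
    rw [if_pos ht, Finset.erase_insert hr, signMerge_zero_left, one_mul, compl_insert_zero,
      star7_apply_of_notMem hr, signMerge_insert_right _ hr, ← one_mul (signMerge _ {0}),
      ← signMerge_zero_left, signMerge_singleton_mul_swap (zero_notMem_Vset_sdiff r)]
    have hgrade := neg_one_pow_mul_apply_of_isGrade hα (Vset \ r)
    rw [hk.neg_one_pow, one_mul] at hgrade
    linear_combination -signMerge (Vset \ r) r * hgrade
  · rw [if_neg ht, hV _ (Finset.mem_compl.2 ht), mul_zero]

end Hyperplane

section G2Structure

variable {𝕜 : Type*} [NormedField 𝕜]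

lemma ratCast_signMerge (s t : Finset (Fin n)) :
    ((signMerge s t : ℚ) : 𝕜) = signMerge s t := by
  simp only [signMerge, Rat.cast_pow, Rat.cast_neg, Rat.cast_one]

lemma ratCast_contractMatrix [CharZero 𝕜] {γ : Form 𝕜 n} {γ' : Form ℚ n}
    (hγ : ∀ s, ((γ' s : ℚ) : 𝕜) = γ s) (s t : Finset (Fin n)) :
    ((contractMatrix γ' s t : ℚ) : 𝕜) = contractMatrix γ s t := by
  rw [contractMatrix_apply, contractMatrix_apply,
    apply_ite (Rat.cast : ℚ → 𝕜), Rat.cast_mul, ratCast_signMerge, hγ, Rat.cast_zero]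

lemma ratCast_phi8 (s : Finset (Fin 8)) : ((phi8 s : ℚ) : 𝕜) = phi8 s := by
  simp only [phi8, apply_ite (Rat.cast : ℚ → 𝕜), Rat.cast_neg, Rat.cast_one, Rat.cast_zero]

lemma ratCast_psi8 (s : Finset (Fin 8)) : ((psi8 s : ℚ) : 𝕜) = psi8 s := by
  simp only [psi8, apply_ite (Rat.cast : ℚ → 𝕜), Rat.cast_neg, Rat.cast_one, Rat.cast_zero]

lemma isGrade_phi8 : isGrade 3 (phi8 : Form 𝕜 8) := by
  intro s hs
  rw [phi8]
  split_ifs <;> first | rfl | (subst s; exact absurd rfl hs)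

lemma isGrade_psi8 : isGrade 4 (psi8 : Form 𝕜 8) := by
  intro s hs
  rw [psi8]
  split_ifs <;> first | rfl | (subst s; exact absurd rfl hs)

lemma isGrade_Phi8 : isGrade 4 (Phi8 : Form 𝕜 8) :=
  isGrade_add (isGrade_wedge (isGrade_e1 0) isGrade_phi8) isGrade_psi8

lemma onV_psi8 : onV (psi8 : Form 𝕜 8) := by
  intro s hs
  rw [psi8]
  split_ifs <;> first | rfl | (subst s; exact absurd hs (by decide))

lemma star7_psi8 [CharZero 𝕜] : star7 psi8 = (phi8 : Form 𝕜 8) := by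
  have hrat : ∀ s, star7 psi8 s = (phi8 s : ℚ) := by decide +kernel
  funext s
  rw [← ratCast_phi8, ← hrat, star7, star7, apply_ite (Rat.cast : ℚ → 𝕜), Rat.cast_mul,
    ratCast_signMerge, ratCast_psi8, Rat.cast_zero]

lemma star7_phi8 [CharZero 𝕜] : star7 phi8 = (psi8 : Form 𝕜 8) := by
  rw [← star7_psi8, star7_star7 onV_psi8]

lemma onV_phi8 [CharZero 𝕜] : onV (phi8 : Form 𝕜 8) := star7_psi8 (𝕜 := 𝕜) ▸ onV_star7 _

-- In indices, `∑ₖ φᵢⱼₖ φₖₗₘ = δᵢₗ δⱼₘ − δᵢₘ δⱼₗ + ψᵢⱼₗₘ`; the second delta vanishes on increasing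
-- pairs. Over `ℚ` the coefficient formulas are computable, so the kernel can evaluate them.
lemma contractMatrix_phi8_mul_self_apply_rat : ∀ r ∈ Vset.powersetCard 2,
    ∀ t ∈ Vset.powersetCard 2, ∑ k, contractMatrix phi8 r {k} * contractMatrix phi8 {k} t =
      (1 : Matrix _ _ ℚ) r t + contractMatrix psi8 r t := by
  decide +kernel

lemma contractMatrix_phi8_mul_self_apply [CharZero 𝕜] {r t : Finset (Fin 8)}
    (hr : r ∈ Vset.powersetCard 2) (ht : t ∈ Vset.powersetCard 2) :
    (contractMatrix phi8 * contractMatrix phi8 : Matrix _ _ 𝕜) r t =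
      (1 : Matrix _ _ 𝕜) r t + contractMatrix psi8 r t := by
  have hsingle (s : Finset (Fin 8)) (hs : s ∉ Set.range fun k ↦ ({k} : Finset (Fin 8))) :
      contractMatrix (phi8 : Form 𝕜 8) r s * contractMatrix phi8 s t = 0 := by
    have hs1 : s.card ≠ 1 := fun h ↦ hs <| (Finset.card_eq_one.1 h).imp fun _ h ↦ h.symm
    rw [contractMatrix_eq_zero isGrade_phi8, zero_mul]
    have hr2 := (Finset.mem_powersetCard.1 hr).2
    omega
  rw [Matrix.mul_apply, ← Fintype.sum_of_injective _ Finset.singleton_injective _ _ hsingle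
    fun _ ↦ rfl]
  have hrat := congrArg (Rat.cast : ℚ → 𝕜) (contractMatrix_phi8_mul_self_apply_rat r hr t ht)
  simpa only [Rat.cast_sum, Rat.cast_mul, Rat.cast_add, ratCast_contractMatrix ratCast_phi8,
    ratCast_contractMatrix ratCast_psi8, Matrix.one_apply, apply_ite (Rat.cast : ℚ → 𝕜),
    Rat.cast_one, Rat.cast_zero] using hrat

lemma contract_contract_phi8 [CharZero 𝕜] {F : Form 𝕜 8} (hF : isGrade 2 F) (hV : onV F) :
    contract (contract F phi8) phi8 = F + contract F psi8 := by
  funext t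
  by_cases ht : t ∈ Vset.powersetCard 2
  · calc contract (contract F phi8) phi8 t
        = ∑ r, F r * (contractMatrix phi8 * contractMatrix phi8 : Matrix _ _ 𝕜) r t := by
          rw [contract, contract, Matrix.vecMul_vecMul]
          rfl
      _ = ∑ r, F r * ((1 : Matrix _ _ 𝕜) r t + contractMatrix psi8 r t) := by
          refine Finset.sum_congr rfl fun r _ ↦ ?_
          by_cases hr : r ∈ Vset.powersetCard 2
          · rw [contractMatrix_phi8_mul_self_apply hr ht]
          · rw [apply_eq_zero_of_notMem_powersetCard hF hV hr, zero_mul, zero_mul]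
      _ = F t + contract F psi8 t := by
          simp only [mul_add, Finset.sum_add_distrib, Matrix.one_apply, mul_ite, mul_one, mul_zero,
            Finset.sum_ite_eq', Finset.mem_univ, if_true, contract_apply]
  · have hφ : isGrade 1 (contract F phi8) := isGrade_contract rfl hF isGrade_phi8
    have hψ : isGrade 2 (contract F psi8) := isGrade_contract rfl hF isGrade_psi8
    rw [Pi.add_apply, apply_eq_zero_of_notMem_powersetCard hF hV ht,
      apply_eq_zero_of_notMem_powersetCard hψ (onV_contract F onV_psi8) ht,
      apply_eq_zero_of_notMem_powersetCard (isGrade_contract rfl hφ isGrade_phi8)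
        (onV_contract _ onV_phi8) ht, add_zero]

lemma star7_wedge_psi8_star7_wedge_psi8 [CharZero 𝕜] {F : Form 𝕜 8} (hF : isGrade 2 F)
    (hV : onV F) : star7 (wedge psi8 (star7 (wedge psi8 F))) = F + star7 (wedge phi8 F) := by
  simp only [star7_wedge, star7_psi8, star7_phi8, contract_contract_phi8 hF hV]

lemma pi27_add (α β : Form 𝕜 8) : pi27 (α + β) = pi27 α + pi27 β := by
  rw [pi27, pi27, pi27, wedge_add, hstar_add, ← smul_add, add_add_add_comm]

lemma pi27_wedge_e1_zero (b : Form 𝕜 8) :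
    pi27 (wedge (e1 0) b) = (4 : 𝕜)⁻¹ • (wedge (e1 0) b + star7 (wedge psi8 b)) := by
  have hΦ : wedge Phi8 (wedge (e1 0) b) = wedge (e1 0) (wedge psi8 b) := by
    rw [wedge_comm_of_even (by decide : Even 4) isGrade_Phi8, wedge_assoc,
      ← wedge_comm_of_even (by decide : Even 4) isGrade_Phi8, Phi8, add_wedge, wedge_add,
      wedge_assoc, wedge_e1_wedge_e1, zero_add]
  rw [pi27, hΦ, hstar_wedge_e1_zero]

lemma pi27_hstar_eq_zero_iff [CharZero 𝕜] {k : ℕ} (hk : Even k) {E : Form 𝕜 8}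
    (hE : isGrade k E) (hV : onV E) : pi27 (hstar E) = 0 ↔ E = 0 := by
  refine ⟨fun h ↦ ?_, fun h ↦ ?_⟩
  · rw [hstar_eq_wedge_e1_zero_star7 hk hE hV, pi27_wedge_e1_zero,
      smul_eq_zero_iff_right (inv_ne_zero (OfNat.ofNat_ne_zero 4))] at h
    have hstar : star7 E = 0 := by
      funext t
      by_cases ht : 0 ∈ t
      · exact onV_star7 E t ht
      · have h0 := congrFun h (insert 0 t)
        rwa [Pi.add_apply, wedge_e1_apply, if_pos (Finset.mem_insert_self 0 t),
          Finset.erase_insert ht, signMerge_zero_left, one_mul,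
          onV_star7 _ _ (Finset.mem_insert_self 0 t), add_zero] at h0
    rw [← star7_star7 hV, hstar]
    funext t
    simp [star7]
  · rw [h]
    funext t
    simp [pi27, hstar, wedge]

lemma hstar_wedge_psi8 {F : Form 𝕜 8} (hF : isGrade 2 F) (hV : onV F) :
    hstar (wedge psi8 F) = wedge (e1 0) (star7 (wedge psi8 F)) :=
  hstar_eq_wedge_e1_zero_star7 (by decide : Even 6) (isGrade_wedge isGrade_psi8 hF)
    (onV_wedge onV_psi8 hV)

lemma pi27_hstar_wedge_psi8 [CharZero 𝕜] {F : Form 𝕜 8} (hF : isGrade 2 F) (hV : onV F) :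
    pi27 (hstar (wedge psi8 F)) = pi27 F := by
  rw [hstar_wedge_psi8 hF hV, pi27_wedge_e1_zero, star7_wedge_psi8_star7_wedge_psi8 hF hV, pi27,
    Phi8, add_wedge, hstar_add, wedge_assoc, hstar_wedge_e1_zero, hstar_wedge_psi8 hF hV]
  congr 1
  abel

lemma inner'_lambda4_e1 [NormedAlgebra ℝ 𝕜] [CharZero 𝕜] {β : Form 𝕜 8} (hβ : onV β) (i : Fin 8) :
    inner' β (lambda4 (e1 i)) =
      -((algebraMap ℝ 𝕜 √8)⁻¹ * wedge psi8 (iprodB i β) Vset) := by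
  rw [← inner'_star7 _ (onV_iprodB hβ i), star7_psi8, lambda4, sharp1_e1, iprod_single,
    inner'_eq_dotProduct, dotProduct_smul, dotProduct_sub, ← inner'_eq_dotProduct,
    ← inner'_eq_dotProduct, inner'_wedge_e1, inner'_wedge_e1, iprodB_zero_of_onV hβ,
    inner'_eq_dotProduct, zero_dotProduct, zero_sub, smul_neg, smul_eq_mul]

lemma pi47_wedge_self_eq_zero [NormedAlgebra ℝ 𝕜] [CharZero 𝕜]
    {F : Form 𝕜 8} (hF : isGrade 2 F) (hV : onV F) {c : 𝕜}
    (h : wedge psi8 F = c • wedge F (wedge F F)) : pi47 (wedge F F) = 0 := by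
  refine Finset.sum_eq_zero fun μ _ ↦ ?_
  have hmem : μ.succ ∈ Vset := by simp [Vset_eq_compl]
  have htop : wedge psi8 (iprodB μ.succ (wedge F F)) Vset = 0 := by
    have hcubic := congrFun (two_smul_wedge_iprodB_wedge_self even_two (by decide : Even 4) hF
      isGrade_psi8 h μ.succ) Vset
    rw [Pi.smul_apply, Pi.smul_apply, iprodB, if_pos hmem, smul_zero] at hcubic
    exact (smul_eq_zero_iff_right two_ne_zero).1 hcubic
  rw [inner'_lambda4_e1 (onV_wedge hV hV), htop, mul_zero, neg_zero, zero_smul]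

theorem statement16_general [NormedAlgebra ℝ 𝕜] (F : Form 𝕜 8) (h2 : isGrade 2 F) (hV : onV F) :
    ((wedge psi8 F + (6 : 𝕜)⁻¹ • wedge F (wedge F F) = 0) ↔
      pi27 (F + (6 : 𝕜)⁻¹ • hstar (wedge F (wedge F F))) = 0) ∧
    ((wedge psi8 F + (6 : 𝕜)⁻¹ • wedge F (wedge F F) = 0) ↔
      (pi27 (F + (6 : 𝕜)⁻¹ • hstar (wedge F (wedge F F))) = 0 ∧
        pi47 (wedge F F) = 0)) := by
  have : CharZero 𝕜 := charZero_of_injective_algebraMap (algebraMap ℝ 𝕜).injective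
  have hpi : pi27 (F + (6 : 𝕜)⁻¹ • hstar (wedge F (wedge F F))) =
      pi27 (hstar (wedge psi8 F + (6 : 𝕜)⁻¹ • wedge F (wedge F F))) := by
    rw [pi27_add, ← pi27_hstar_wedge_psi8 h2 hV, ← pi27_add, ← hstar_smul, ← hstar_add]
  have hiff := pi27_hstar_eq_zero_iff (by decide : Even 6)
    (isGrade_add (isGrade_wedge isGrade_psi8 h2)
      (isGrade_smul (6 : 𝕜)⁻¹ (isGrade_wedge h2 (isGrade_wedge h2 h2))))
    (onV_add (onV_wedge onV_psi8 hV) (onV_smul _ (onV_wedge hV (onV_wedge hV hV))))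
  rw [hpi, hiff]
  refine ⟨Iff.rfl, fun h ↦ ⟨h, ?_⟩, And.left⟩
  refine pi47_wedge_self_eq_zero h2 hV (c := -(6 : 𝕜)⁻¹) ?_
  rw [neg_smul]
  exact eq_neg_of_add_eq_zero_left h

end G2Structure

/-- Lemma 7.1.  Let `F` be an `√-1 ℝ`-valued 2-form on `ℝ⁸` with
`i(e₀) F = 0` (the pointwise model of a connection on a `G₂`-manifold `Y` pulled back to
`S¹ × Y`).  The following are equivalent:
(1) `*₇φ ∧ F + (1/6) F³ = 0` (the `G₂` dDT equation);
(2) `π²₇(F + (1/6) *₈F³) = 0`;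
(3) `π²₇(F + (1/6) *₈F³) = 0` and `π⁴₇(F²) = 0`. -/
theorem statement16 (F : Form ℂ 8) (h2 : isGrade 2 F)
    (hIm : ∀ s, (F s).re = 0) (hV : onV F) :
    ((wedge psi8 F + (6 : ℂ)⁻¹ • wedge F (wedge F F) = 0) ↔
      pi27 (F + (6 : ℂ)⁻¹ • hstar (wedge F (wedge F F))) = 0) ∧
    ((wedge psi8 F + (6 : ℂ)⁻¹ • wedge F (wedge F F) = 0) ↔
      (pi27 (F + (6 : ℂ)⁻¹ • hstar (wedge F (wedge F F))) = 0 ∧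
        pi47 (wedge F F) = 0)) :=
  statement16_general F h2 hV

end FMpaper
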